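/- arXiv:2205.03581 — 2 statements merged into one kernel-verified Lean document; each statement's English description precedes it below -/
import Mathlib

section
/- Let A be a complex unital Banach algebra and a, b, c, d ∈ A satisfying acd = dbd and dba = aca. Then the ag-Drazin spectra of ac and bd coincide: σ_ad(ac) = σ_ad(bd). -/
open Filter Topology

/-- An element of a complex Banach algebra is quasinilpotent if its spectrum is `{0}`. -/
def IsQuasinilpotent {A : Type*} [NormedRing A] [NormedAlgebra ℂ A] (b : A) : Prop :=
  spectrum ℂ b = {0}

/-- `a` is generalized Drazin invertible. -/
def IsGDrazinInv {A : Type*} [NormedRing A] [NormedAlgebra ℂ A] (a : A) : Prop :=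
  ∃ x : A, a * x = x * a ∧ x * a * x = x ∧ IsQuasinilpotent (a - a ^ 2 * x)

/-- `a ∈ A^acc`: `a - λ1` is generalized Drazin invertible for all nonzero `λ`. -/
def MemAcc {A : Type*} [NormedRing A] [NormedAlgebra ℂ A] (a : A) : Prop :=
  ∀ l : ℂ, l ≠ 0 → IsGDrazinInv (a - l • (1 : A))

/-- `x` is an ag-Drazin inverse of `a`. -/
def IsAgDrazinInverseOf {A : Type*} [NormedRing A] [NormedAlgebra ℂ A] (x a : A) : Prop :=
  a * x = x * a ∧ x * a * x = x ∧ MemAcc (a - a ^ 2 * x)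

/-- `a` is ag-Drazin invertible. -/
def IsAgDrazinInv {A : Type*} [NormedRing A] [NormedAlgebra ℂ A] (a : A) : Prop :=
  ∃ x : A, IsAgDrazinInverseOf x a

/-- The generalized Drazin spectrum. -/
def gDrazinSpectrum {A : Type*} [NormedRing A] [NormedAlgebra ℂ A] (a : A) : Set ℂ :=
  {l : ℂ | ¬ IsGDrazinInv (a - l • (1 : A))}

/-- The ag-Drazin spectrum. -/
def agDrazinSpectrum {A : Type*} [NormedRing A] [NormedAlgebra ℂ A] (a : A) : Set ℂ :=
  {l : ℂ | ¬ IsAgDrazinInv (a - l • (1 : A))}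

/-!
In a nontrivial algebra, the generalized Drazin spectrum of an element is the set of accumulation
points of its spectrum, and the ag-Drazin spectrum is the set of accumulation points of that set.
For one inclusion, a commuting outer inverse `x` of `a` splits `a` as the sum of `a - a²x` and
`a²x`, whose products vanish, and `0` is not an accumulation point of the spectrum of `a²x`. For
the other, a circle around `0` that misses the spectrum yields a Riesz projection, hence such an
`x` with the spectrum of `a - a²x` inside the circle. If `0` is not an accumulation point of
accumulation points of the spectrum, such circles exist with arbitrarily small radius.

Accumulation points do not see the single point `0`, so it remains to compare nonzero spectra.
The element `n = ac - db` satisfies `n² = 0` and `n(db) = 0`, so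
`w - ac = (1 - w⁻¹n)(w - db)` for `w ≠ 0`, and `ac` has the nonzero spectrum of `db`, which is
that of `bd`.
-/

section NonzeroSpectrum

variable {𝕜 A : Type*} [Field 𝕜] [Ring A] [Algebra 𝕜 A]

theorem spectrum_add_sdiff_zero_of_mul_eq_zero {u v : A} (huv : u * v = 0) (hvu : v * u = 0) :
    spectrum 𝕜 (u + v) \ {0} = (spectrum 𝕜 u ∪ spectrum 𝕜 v) \ {0} := by
  ext w
  simp only [Set.mem_sdiff, Set.mem_union, Set.mem_singleton_iff, spectrum.mem_iff]
  refine and_congr_left fun hw ↦ ?_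
  have comm_u := Algebra.commutes w u
  have comm_v := Algebra.commutes w v
  have hcomm : Commute (algebraMap 𝕜 A w - u) (algebraMap 𝕜 A w - v) := by
    simp only [Commute, SemiconjBy, sub_mul, mul_sub, huv, hvu, comm_u, comm_v]
    abel
  have hmul : (algebraMap 𝕜 A w - u) * (algebraMap 𝕜 A w - v) =
      algebraMap 𝕜 A w * (algebraMap 𝕜 A w - (u + v)) := by
    simp only [sub_mul, mul_sub, mul_add, huv, comm_u]
    abel
  rw [← not_and_or, ← hcomm.isUnit_mul_iff, hmul, Commute.isUnit_mul_iff (Algebra.commutes w _),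
    and_iff_right ((IsUnit.mk0 w hw).map _)]

theorem spectrum_add_sdiff_zero_of_isNilpotent {r n : A} (hn : IsNilpotent n) (hnr : n * r = 0) :
    spectrum 𝕜 (r + n) \ {0} = spectrum 𝕜 r \ {0} := by
  ext w
  simp only [Set.mem_sdiff, Set.mem_singleton_iff, spectrum.mem_iff]
  refine and_congr_left fun hw ↦ not_congr ?_
  have hfactor : algebraMap 𝕜 A w - (r + n) = (1 - w⁻¹ • n) * (algebraMap 𝕜 A w - r) := by
    rw [sub_mul, one_mul, mul_sub, smul_mul_assoc _ n r, hnr, smul_zero, ← Algebra.commutes,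
      ← Algebra.smul_def, smul_inv_smul₀ hw]
    abel
  have hunit : IsUnit (1 - w⁻¹ • n) := (hn.smul w⁻¹).isUnit_one_sub
  rw [hfactor]
  exact hunit.unit.isUnit_units_mul _

theorem spectrum_mul_sdiff_zero_of_acd_dbd {a b c d : A} (hacd : a * c * d = d * b * d)
    (hdba : d * b * a = a * c * a) :
    spectrum 𝕜 (a * c) \ {0} = spectrum 𝕜 (b * d) \ {0} := by
  set n := a * c - d * b with hn
  have hnd : n * d = 0 := by rw [hn, sub_mul, hacd, sub_self]
  have hna : n * a = 0 := by rw [hn, sub_mul, hdba, sub_self]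
  have hndb : n * (d * b) = 0 := by rw [← mul_assoc, hnd, zero_mul]
  have hnn : n ^ 2 = 0 := by
    rw [sq]
    nth_rw 2 [hn]
    rw [mul_sub, hndb, ← mul_assoc, hna, zero_mul, sub_zero]
  have hac : a * c = d * b + n := by rw [hn, add_sub_cancel]
  rw [hac, spectrum_add_sdiff_zero_of_isNilpotent ⟨2, hnn⟩ hndb, spectrum.nonzero_mul_comm]

end NonzeroSpectrum

section DerivedSet

variable {X Y : Type*} [TopologicalSpace X] [TopologicalSpace Y]

theorem derivedSet_eq_empty_of_finite [T1Space X] {S : Set X} (hS : S.Finite) :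
    derivedSet S = ∅ :=
  Set.eq_empty_of_forall_notMem fun _ hx ↦ Set.Infinite.of_accPt hx hS

theorem derivedSet_sdiff_singleton [T1Space X] (S : Set X) (x : X) :
    derivedSet (S \ {x}) = derivedSet S := by
  refine (derivedSet_mono _ _ Set.sdiff_subset).antisymm ?_
  calc derivedSet S ⊆ derivedSet (S \ {x} ∪ {x}) :=
        derivedSet_mono _ _ (by rw [Set.sdiff_union_self]; exact Set.subset_union_left)
    _ = derivedSet (S \ {x}) := by
        rw [derivedSet_union, derivedSet_eq_empty_of_finite (Set.finite_singleton x),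
          Set.union_empty]

theorem derivedSet_congr_of_sdiff_singleton [T1Space X] {S T : Set X} {x : X}
    (h : S \ {x} = T \ {x}) : derivedSet S = derivedSet T := by
  rw [← derivedSet_sdiff_singleton S x, h, derivedSet_sdiff_singleton]

theorem derivedSet_derivedSet_subset [T1Space X] (S : Set X) :
    derivedSet (derivedSet S) ⊆ derivedSet S :=
  (isClosed_iff_derivedSet_subset _).1 (isClosed_derivedSet S)

theorem derivedSet_image_homeomorph (f : X ≃ₜ Y) (S : Set X) :
    derivedSet (f '' S) = f '' derivedSet S := by
  refine Set.Subset.antisymm ?_ (f.continuous.image_derivedSet f.injective)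
  rw [f.image_eq_preimage_symm (derivedSet S), ← Set.image_subset_iff]
  calc f.symm '' derivedSet (f '' S) ⊆ derivedSet (f.symm '' (f '' S)) :=
        f.symm.continuous.image_derivedSet f.symm.injective
    _ = derivedSet S := by rw [← Set.image_comp, f.symm_comp_self, Set.image_id]

end DerivedSet

section Radius

variable {X : Type*} [PseudoMetricSpace X]

theorem exists_closedBall_inter_subset_of_notMem_derivedSet {S : Set X} {x : X}
    (hx : x ∉ derivedSet S) : ∃ ε > 0, Metric.closedBall x ε ∩ S ⊆ {x} := by
  rw [mem_derivedSet, accPt_iff_nhds] at hx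
  push Not at hx
  obtain ⟨U, hU, hUS⟩ := hx
  obtain ⟨ε, hε, hball⟩ := Metric.nhds_basis_closedBall.mem_iff.1 hU
  exact ⟨ε, hε, fun y hy ↦ hUS y ⟨hball hy.1, hy.2⟩⟩

theorem exists_disjoint_sphere_of_notMem_derivedSet_derivedSet [ProperSpace X] {S : Set X} {x : X}
    (hx : x ∉ derivedSet (derivedSet S)) :
    ∃ R > 0, Disjoint (Metric.sphere x R) S ∧ Metric.closedBall x R ∩ derivedSet S ⊆ {x} := by
  obtain ⟨ε, hε, hball⟩ := exists_closedBall_inter_subset_of_notMem_derivedSet hx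
  set K := Metric.closedBall x ε \ Metric.ball x (ε / 2)
  have hfinite : (K ∩ S).Finite := by
    by_contra hinfinite
    obtain ⟨y, hyK, hy⟩ := Set.Infinite.exists_accPt_of_subset_isCompact hinfinite
      ((isCompact_closedBall x ε).diff Metric.isOpen_ball) Set.inter_subset_left
    have hyx : y = x := hball ⟨hyK.1, derivedSet_mono _ _ Set.inter_subset_right hy⟩
    exact hyK.2 (hyx ▸ Metric.mem_ball_self (half_pos hε))
  obtain ⟨R, ⟨hR₁, hR₂⟩, hR⟩ :=
    ((Set.Ioo_infinite (half_lt_self hε)).sdiff (hfinite.image (dist · x))).nonempty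
  refine ⟨R, (half_pos hε).trans hR₁, ?_, fun y hy ↦
    hball ⟨Metric.closedBall_subset_closedBall hR₂.le hy.1, hy.2⟩⟩
  refine Set.disjoint_left.2 fun y (hy : dist y x = R) hyS ↦ hR ⟨y, ⟨⟨?_, ?_⟩, hyS⟩, hy⟩
  · exact hy.trans_le hR₂.le
  · exact fun hlt ↦ (hy ▸ hR₁).not_gt hlt

theorem exists_annulus_disjoint_of_disjoint_sphere {S : Set X} (hS : IsCompact S) {x : X} {R : ℝ}
    (hR : 0 < R) (hdisj : Disjoint (Metric.sphere x R) S) :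
    ∃ r ∈ Set.Ioo 0 R, Disjoint (Metric.closedBall x R \ Metric.ball x r) S := by
  have hclosed : IsClosed ((dist · x) '' S) :=
    (hS.image (continuous_id.dist continuous_const)).isClosed
  have hmem : ((dist · x) '' S)ᶜ ∈ 𝓝 R := by
    refine hclosed.isOpen_compl.mem_nhds ?_
    rintro ⟨y, hyS, hy⟩
    exact Set.disjoint_left.1 hdisj hy hyS
  obtain ⟨l, ⟨hl₀, hlR⟩, hl⟩ := exists_Ioc_subset_of_mem_nhds' hmem hR
  obtain ⟨r, hlr, hrR⟩ := exists_between hlR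
  refine ⟨r, ⟨hl₀.trans_lt hlr, hrR⟩, Set.disjoint_left.2 fun y hy hyS ↦ ?_⟩
  exact hl ⟨hlr.trans_le (not_lt.1 hy.2), hy.1⟩ ⟨y, hyS, rfl⟩

end Radius

section RieszProjection

open Complex Metric

theorem commute_resolvent {𝕜 A : Type*} [CommSemiring 𝕜] [Ring A] [Algebra 𝕜 A] {a b : A}
    (h : Commute b a) (z : 𝕜) : Commute b (resolvent a z) := by
  have hsub : Commute b (algebraMap 𝕜 A z - a) := (Algebra.commute_algebraMap_right z b).sub_right h
  by_cases hz : IsUnit (algebraMap 𝕜 A z - a)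
  · obtain ⟨u, hu⟩ := hz
    rw [resolvent, ← hu, Ring.inverse_unit]
    exact (hu ▸ hsub).units_inv_right
  · rw [resolvent, Ring.inverse_non_unit _ hz]
    exact Commute.zero_right b

variable {A : Type*} [NormedRing A] [NormedAlgebra ℂ A] {a b : A} {c w : ℂ} {R : ℝ}

theorem continuousOn_resolvent [CompleteSpace A] {s : Set ℂ} (hs : Disjoint s (spectrum ℂ a)) :
    ContinuousOn (resolvent a) s := fun _ hz ↦
  (spectrum.hasDerivAt_resolvent_const_left
    (not_not.1 (Set.disjoint_left.1 hs hz))).continuousAt.continuousWithinAt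

theorem mul_circleIntegral [CompleteSpace A] {f : ℂ → A} (hf : CircleIntegrable f c R) (b : A) :
    b * ∮ z in C(c, R), f z = ∮ z in C(c, R), b * f z := by
  have h := (ContinuousLinearMap.mul ℂ A b).intervalIntegral_comp_comm hf.out
  simpa only [circleIntegral, ContinuousLinearMap.mul_apply', mul_smul_comm] using h.symm

theorem circleIntegral_mul [CompleteSpace A] {f : ℂ → A} (hf : CircleIntegrable f c R) (b : A) :
    (∮ z in C(c, R), f z) * b = ∮ z in C(c, R), f z * b := by
  have h := ((ContinuousLinearMap.mul ℂ A).flip b).intervalIntegral_comp_comm hf.out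
  simpa only [circleIntegral, ContinuousLinearMap.flip_apply, ContinuousLinearMap.mul_apply',
    smul_mul_assoc] using h.symm

theorem commute_circleIntegral [CompleteSpace A] {f : ℂ → A} (h : ∀ z, Commute b (f z)) :
    Commute b (∮ z in C(c, R), f z) := by
  by_cases hf : CircleIntegrable f c R
  · rw [Commute, SemiconjBy, mul_circleIntegral hf, circleIntegral_mul hf]
    simp only [(h _).eq]
  · rw [circleIntegral.integral_undef hf]
    exact Commute.zero_right b

/-- The Riesz projection of `a` for the part of its spectrum inside the circle `|z - c| = R`. It is
meaningful only when the circle misses the spectrum, on which `resolvent a` is zero by convention.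
-/
noncomputable def rieszProjection (a : A) (c : ℂ) (R : ℝ) : A :=
  (2 * Real.pi * I : ℂ)⁻¹ • ∮ z in C(c, R), resolvent a z

/-- The Cauchy transform at `w` of the resolvent of `a` restricted to the circle `|z - c| = R`.
Up to sign it inverts `w - a` on the complement of the range of `rieszProjection a c R` when `w`
lies inside the circle, and on that range when `w` lies outside. -/
noncomputable def resolventCauchyTransform (a : A) (c : ℂ) (R : ℝ) (w : ℂ) : A :=
  (2 * Real.pi * I : ℂ)⁻¹ • ∮ z in C(c, R), (z - w)⁻¹ • resolvent a z

variable [CompleteSpace A]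

theorem commute_rieszProjection (h : Commute b a) : Commute b (rieszProjection a c R) :=
  (commute_circleIntegral (commute_resolvent h)).smul_right _

theorem commute_resolventCauchyTransform (h : Commute b a) :
    Commute b (resolventCauchyTransform a c R w) :=
  (commute_circleIntegral fun z ↦ (commute_resolvent h z).smul_right _).smul_right _

theorem sub_mul_resolventCauchyTransform (hR : 0 ≤ R)
    (hdisj : Disjoint (sphere c R) (spectrum ℂ a)) (hw : w ∉ sphere c R) :
    (algebraMap ℂ A w - a) * resolventCauchyTransform a c R w =
      ((2 * Real.pi * I : ℂ)⁻¹ * ∮ z in C(c, R), (z - w)⁻¹) • (1 : A) - rieszProjection a c R := by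
  have hne : ∀ z ∈ sphere c R, z - w ≠ 0 := fun z hz hzw ↦ hw (sub_eq_zero.1 hzw ▸ hz)
  have hkernel : ContinuousOn (fun z ↦ (z - w)⁻¹) (sphere c R) :=
    (continuousOn_id.sub continuousOn_const).inv₀ hne
  have hresolvent := continuousOn_resolvent hdisj
  have hintegrand : Set.EqOn
      (fun z ↦ (algebraMap ℂ A w - a) * ((z - w)⁻¹ • resolvent a z))
      (fun z ↦ (z - w)⁻¹ • (1 : A) - resolvent a z) (sphere c R) := by
    intro z hz
    have hz_unit : (algebraMap ℂ A z - a) * resolvent a z = 1 :=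
      Ring.mul_inverse_cancel _ (not_not.1 (Set.disjoint_left.1 hdisj hz))
    have hsplit : algebraMap ℂ A w - a = (algebraMap ℂ A z - a) - (z - w) • (1 : A) := by
      simp only [Algebra.algebraMap_eq_smul_one, sub_smul]
      abel
    simp only
    rw [mul_smul_comm, hsplit, sub_mul, hz_unit, smul_mul_assoc, one_mul, smul_sub,
      inv_smul_smul₀ (hne z hz)]
  have htransform : CircleIntegrable (fun z ↦ (z - w)⁻¹ • resolvent a z) c R :=
    (hkernel.smul hresolvent).circleIntegrable hR
  have hscalar : CircleIntegrable (fun z ↦ (z - w)⁻¹ • (1 : A)) c R :=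
    (hkernel.smul continuousOn_const).circleIntegrable hR
  rw [resolventCauchyTransform, rieszProjection, mul_smul_comm, mul_circleIntegral htransform,
    circleIntegral.integral_congr hR hintegrand,
    circleIntegral.integral_sub hscalar (hresolvent.circleIntegrable hR),
    circleIntegral.integral_smul_const, smul_sub, smul_smul]

theorem sub_mul_resolventCauchyTransform_of_mem_ball
    (hdisj : Disjoint (sphere c R) (spectrum ℂ a)) (hw : w ∈ ball c R) :
    (algebraMap ℂ A w - a) * resolventCauchyTransform a c R w = 1 - rieszProjection a c R := by
  rw [sub_mul_resolventCauchyTransform (pos_of_mem_ball hw).le hdisj (ne_of_lt hw),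
    circleIntegral.integral_sub_inv_of_mem_ball hw, inv_mul_cancel₀ two_pi_I_ne_zero, one_smul]

theorem sub_mul_resolventCauchyTransform_of_notMem_closedBall (hR : 0 ≤ R)
    (hdisj : Disjoint (sphere c R) (spectrum ℂ a)) (hw : w ∉ closedBall c R) :
    (algebraMap ℂ A w - a) * resolventCauchyTransform a c R w = -rieszProjection a c R := by
  have hkernel : DiffContOnCl ℂ (fun z ↦ (z - w)⁻¹) (ball c R) := by
    refine DifferentiableOn.diffContOnCl fun z hz ↦ ?_
    have hzw : z - w ≠ 0 := fun h ↦
      hw (sub_eq_zero.1 h ▸ closure_ball_subset_closedBall hz)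
    exact ((differentiableAt_id.sub_const w).inv hzw).differentiableWithinAt
  rw [sub_mul_resolventCauchyTransform hR hdisj fun h ↦ hw (sphere_subset_closedBall h),
    hkernel.circleIntegral_eq_zero hR, mul_zero, zero_smul, zero_sub]

theorem differentiableOn_resolventCauchyTransform (hR : 0 < R)
    (hdisj : Disjoint (sphere c R) (spectrum ℂ a)) :
    DifferentiableOn ℂ (resolventCauchyTransform a c R) (ball c R) := by
  lift R to NNReal using hR.le
  rw [← Metric.eball_coe]
  exact (hasFPowerSeriesOn_cauchy_integral
    ((continuousOn_resolvent hdisj).circleIntegrable hR.le) (by exact_mod_cast hR)).differentiableOn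

theorem rieszProjection_eq_of_disjoint_annulus {r : ℝ} (hr : 0 < r) (hrR : r ≤ R)
    (hdisj : Disjoint (closedBall c R \ ball c r) (spectrum ℂ a)) :
    rieszProjection a c R = rieszProjection a c r := by
  rw [rieszProjection, rieszProjection,
    circleIntegral_eq_of_differentiable_on_annulus_off_countable hr hrR Set.countable_empty
      (continuousOn_resolvent hdisj)]
  rintro z ⟨⟨hzR, hzr⟩, -⟩
  exact (spectrum.hasDerivAt_resolvent_const_left (not_not.1 (Set.disjoint_left.1 hdisj
    ⟨ball_subset_closedBall hzR, fun h ↦ hzr (ball_subset_closedBall h)⟩))).differentiableAt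

theorem rieszProjection_mul_resolvent (hdisj : Disjoint (sphere c R) (spectrum ℂ a))
    (hw : w ∈ ball c R) (hwa : w ∉ spectrum ℂ a) :
    rieszProjection a c R * resolvent a w =
      resolvent a w - resolventCauchyTransform a c R w := by
  set e := rieszProjection a c R with he
  have hinv : resolvent a w * (algebraMap ℂ A w - a) = 1 :=
    Ring.inverse_mul_cancel _ (not_not.1 hwa)
  have htransform : resolventCauchyTransform a c R w = resolvent a w * (1 - e) := by
    rw [he, ← sub_mul_resolventCauchyTransform_of_mem_ball hdisj hw, ← mul_assoc, hinv, one_mul]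
  have hcomm : Commute e (resolvent a w) :=
    commute_resolvent (commute_rieszProjection (Commute.refl a)).symm w
  rw [htransform, mul_sub, mul_one, sub_sub_cancel, hcomm.eq]

/- On a slightly smaller circle `e * (w - a)⁻¹ = (w - a)⁻¹ - K w`, where `e` is the projection and
`K` the Cauchy transform, which is holomorphic inside the larger circle. Integrating over the
smaller circle therefore gives `e * e = e`. -/
theorem isIdempotentElem_rieszProjection (hR : 0 < R)
    (hdisj : Disjoint (sphere c R) (spectrum ℂ a)) :
    IsIdempotentElem (rieszProjection a c R) := by
  obtain ⟨r, ⟨hr, hrR⟩, hannulus⟩ :=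
    exists_annulus_disjoint_of_disjoint_sphere (spectrum.isCompact a) hR hdisj
  have hsub : closedBall c r ⊆ ball c R := closedBall_subset_ball hrR
  have hsub_annulus : sphere c r ⊆ closedBall c R \ ball c r := fun z hz ↦
    ⟨ball_subset_closedBall (hsub (sphere_subset_closedBall hz)), (mem_sphere.1 hz).not_lt⟩
  have hsphere : Disjoint (sphere c r) (spectrum ℂ a) := hannulus.mono_left hsub_annulus
  set e := rieszProjection a c R
  have hmul : Set.EqOn (fun z ↦ e * resolvent a z)
      (fun z ↦ resolvent a z - resolventCauchyTransform a c R z) (sphere c r) := fun z hz ↦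
    rieszProjection_mul_resolvent hdisj (hsub (sphere_subset_closedBall hz))
      (Set.disjoint_left.1 hsphere hz)
  have hdiff := differentiableOn_resolventCauchyTransform hR hdisj
  have hresolvent := (continuousOn_resolvent hsphere).circleIntegrable hr.le
  have htransform :=
    (hdiff.continuousOn.mono (sphere_subset_closedBall.trans hsub)).circleIntegrable hr.le
  have hcauchy : ∮ z in C(c, r), resolventCauchyTransform a c R z = 0 :=
    ((hdiff.mono (closure_ball_subset_closedBall.trans hsub)).diffContOnCl).circleIntegral_eq_zero
      hr.le
  have her : e = rieszProjection a c r :=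
    rieszProjection_eq_of_disjoint_annulus hr hrR.le hannulus
  calc e * e = (2 * Real.pi * I : ℂ)⁻¹ • ∮ z in C(c, r), e * resolvent a z := by
        nth_rw 2 [her]
        rw [rieszProjection, mul_smul_comm, mul_circleIntegral hresolvent]
    _ = (2 * Real.pi * I : ℂ)⁻¹ • ∮ z in C(c, r), resolvent a z := by
        rw [circleIntegral.integral_congr hr.le hmul,
          circleIntegral.integral_sub hresolvent htransform, hcauchy, sub_zero]
    _ = e := her.symm

theorem spectrum_mul_rieszProjection_sdiff_zero_subset (hR : 0 < R)
    (hdisj : Disjoint (sphere c R) (spectrum ℂ a)) :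
    spectrum ℂ (a * rieszProjection a c R) \ {0} ⊆ closedBall c R := by
  rintro w ⟨hw, hw₀ : w ≠ 0⟩
  by_contra hwR
  set e := rieszProjection a c R
  set k := resolventCauchyTransform a c R w
  have hee : e * e = e := isIdempotentElem_rieszProjection hR hdisj
  have hae : Commute a e := commute_rieszProjection (Commute.refl a)
  have hak : Commute a k := commute_resolventCauchyTransform (Commute.refl a)
  have hek : Commute e k := commute_resolventCauchyTransform hae.symm
  have hk : (algebraMap ℂ A w - a) * k = -e :=
    sub_mul_resolventCauchyTransform_of_notMem_closedBall hR.le hdisj hwR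
  have hcomm : Commute (algebraMap ℂ A w - a * e) (w⁻¹ • (1 - e) - e * k) := by
    have hace : Commute (a * e) e := hae.mul_left (Commute.refl e)
    have hcorner : Commute (a * e) (w⁻¹ • (1 - e) - e * k) :=
      (((Commute.one_right _).sub_right hace).smul_right _).sub_right
        (hace.mul_right (hak.mul_left hek))
    exact (Algebra.commute_algebraMap_left w _).sub_left hcorner
  have hcompl : (algebraMap ℂ A w - a * e) * (1 - e) = w • (1 - e) := by
    rw [sub_mul, mul_assoc a, mul_sub e, mul_one, hee, sub_self, mul_zero, sub_zero,
      Algebra.smul_def]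
  have hrange : (algebraMap ℂ A w - a * e) * e = e * (algebraMap ℂ A w - a) := by
    rw [sub_mul, mul_sub, mul_assoc a, hee, hae.eq, Algebra.commutes]
  have hinv : (algebraMap ℂ A w - a * e) * (w⁻¹ • (1 - e) - e * k) = 1 := by
    rw [mul_sub, mul_smul_comm, hcompl, inv_smul_smul₀ hw₀, ← mul_assoc, hrange, mul_assoc, hk,
      mul_neg, hee, sub_neg_eq_add, sub_add_cancel]
  have hunit := hcomm.isUnit_mul_iff.1 (by rw [hinv]; exact isUnit_one)
  exact hw hunit.1

end RieszProjection

section CommutingOuterInverse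

variable {𝕜 A : Type*}

theorem isUnit_algebraMap_sub_of_groupInverse [Field 𝕜] [Ring A] [Algebra 𝕜 A] {u x : A} {w : 𝕜}
    (hux : Commute u x) (huxu : u * x * u = u) (hxux : x * u * x = x) (hw : w ≠ 0)
    (hunit : IsUnit (1 - w • x)) : IsUnit (algebraMap 𝕜 A w - u) := by
  set p := 1 - u * x with hp
  have hpp : p * p = p := by
    have hidem : IsIdempotentElem (u * x) := by rw [IsIdempotentElem, ← mul_assoc, huxu]
    exact hidem.one_sub
  have hup : u * p = 0 := by rw [hp, mul_sub, mul_one, hux.eq, ← mul_assoc, huxu, sub_self]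
  have hxp : x * p = 0 := by rw [hp, mul_sub, mul_one, ← mul_assoc, hxux, sub_self]
  have hpu : Commute p u := (Commute.one_left u).sub_left ((Commute.refl u).mul_left hux.symm)
  have hpx : Commute p x := (Commute.one_left x).sub_left (hux.mul_left (Commute.refl x))
  have hfactor : algebraMap 𝕜 A w - u = (1 - w • x) * (w • p - u) := by
    rw [sub_mul, one_mul, mul_sub, smul_mul_assoc w x (w • p), mul_smul_comm w x p, hxp,
      smul_zero, smul_zero, smul_mul_assoc, ← hux.eq, hp, smul_sub,
      Algebra.algebraMap_eq_smul_one]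
    abel
  have hcomm : Commute (w • p - u) (w⁻¹ • p - x) :=
    ((((Commute.refl p).smul_right _).sub_right hpx).smul_left w).sub_left
      ((hpu.symm.smul_right _).sub_right hux)
  have hinv : (w • p - u) * (w⁻¹ • p - x) = 1 := by
    rw [sub_mul, mul_sub, mul_sub, smul_mul_smul_comm, mul_inv_cancel₀ hw, hpp, smul_mul_assoc,
      hpx.eq, hxp, mul_smul_comm, hup, hp]
    simp only [smul_zero, one_smul, sub_zero, zero_sub, sub_neg_eq_add, sub_add_cancel]
  have hinvertible := hcomm.isUnit_mul_iff.1 (by rw [hinv]; exact isUnit_one)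
  exact hfactor ▸ hunit.mul hinvertible.1

theorem zero_notMem_derivedSet_spectrum_of_groupInverse [NormedField 𝕜] [NormedRing A]
    [NormedAlgebra 𝕜 A] [CompleteSpace A] {u x : A} (hux : Commute u x) (huxu : u * x * u = u)
    (hxux : x * u * x = x) : 0 ∉ derivedSet (spectrum 𝕜 u) := by
  have hnear : ∀ᶠ w : 𝕜 in 𝓝 0, IsUnit (1 - w • x) := by
    have hcont : Continuous fun w : 𝕜 ↦ 1 - w • x := by fun_prop
    exact hcont.continuousAt.eventually (Units.isOpen.mem_nhds (by simp))
  rw [mem_derivedSet, accPt_iff_frequently_nhdsNE, not_frequently]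
  filter_upwards [hnear.filter_mono nhdsWithin_le_nhds, self_mem_nhdsWithin] with w hunit hw
  exact not_not.2 (isUnit_algebraMap_sub_of_groupInverse hux huxu hxux hw hunit)

theorem mul_self_sq_mul_of_outerInverse [Monoid A] {a x : A} (hax : Commute a x)
    (hxax : x * a * x = x) : a ^ 2 * x * (a ^ 2 * x) = a * (a ^ 2 * x) := by
  calc a ^ 2 * x * (a ^ 2 * x) = a ^ 3 * (x * a * x) := by
        rw [mul_assoc, ← mul_assoc x, ← (hax.pow_left 2).eq, pow_succ a 2]
        simp only [sq, mul_assoc, hax.eq]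
    _ = a * (a ^ 2 * x) := by rw [hxax, pow_succ', mul_assoc]

theorem spectrum_sdiff_zero_eq_of_outerInverse [Field 𝕜] [Ring A] [Algebra 𝕜 A] {a x : A}
    (hax : Commute a x) (hxax : x * a * x = x) :
    spectrum 𝕜 a \ {0} = (spectrum 𝕜 (a - a ^ 2 * x) ∪ spectrum 𝕜 (a ^ 2 * x)) \ {0} := by
  have hcomm : Commute a (a ^ 2 * x) := ((Commute.refl a).pow_right 2).mul_right hax
  have hsq := mul_self_sq_mul_of_outerInverse hax hxax
  have hleft : (a - a ^ 2 * x) * (a ^ 2 * x) = 0 := by rw [sub_mul, hsq, sub_self]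
  have hright : a ^ 2 * x * (a - a ^ 2 * x) = 0 := by rw [mul_sub, hsq, hcomm.eq, sub_self]
  rw [← spectrum_add_sdiff_zero_of_mul_eq_zero hleft hright, sub_add_cancel]

theorem derivedSet_spectrum_eq_union_of_outerInverse [NormedField 𝕜] [Ring A] [Algebra 𝕜 A]
    {a x : A} (hax : Commute a x) (hxax : x * a * x = x) :
    derivedSet (spectrum 𝕜 a) =
      derivedSet (spectrum 𝕜 (a - a ^ 2 * x)) ∪ derivedSet (spectrum 𝕜 (a ^ 2 * x)) := by
  rw [derivedSet_congr_of_sdiff_singleton (spectrum_sdiff_zero_eq_of_outerInverse hax hxax),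
    derivedSet_union]

theorem zero_notMem_derivedSet_spectrum_sq_mul_of_outerInverse [NormedField 𝕜] [NormedRing A]
    [NormedAlgebra 𝕜 A] [CompleteSpace A] {a x : A} (hax : Commute a x)
    (hxax : x * a * x = x) : 0 ∉ derivedSet (spectrum 𝕜 (a ^ 2 * x)) := by
  have hmul : a ^ 2 * x * x = a * x := by
    rw [sq, mul_assoc a, hax.eq, mul_assoc, hxax, hax.eq]
  refine zero_notMem_derivedSet_spectrum_of_groupInverse (x := x)
    ((hax.pow_left 2).mul_left (Commute.refl x)) ?_ ?_
  · have hcomm : Commute (a * x) (a ^ 2 * x) :=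
      (((Commute.refl a).pow_right 2).mul_right hax).mul_left
        ((hax.symm.pow_right 2).mul_right (Commute.refl x))
    calc a ^ 2 * x * x * (a ^ 2 * x) = a ^ 2 * x * (a * x) := by rw [hmul, hcomm.eq]
      _ = a ^ 2 * (x * a * x) := by simp only [mul_assoc]
      _ = a ^ 2 * x := by rw [hxax]
  · rw [mul_assoc, hmul, ← mul_assoc, hxax]

end CommutingOuterInverse

section Shift

theorem zero_mem_image_subRight_iff {G : Type*} [TopologicalSpace G] [AddGroup G]
    [IsTopologicalAddGroup G] {S : Set G} {g : G} :
    0 ∈ Homeomorph.subRight g '' S ↔ g ∈ S := by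
  simp [sub_eq_zero]

theorem derivedSet_spectrum_sub_smul_one {𝕜 A : Type*} [NormedField 𝕜] [Ring A] [Algebra 𝕜 A]
    (a : A) (l : 𝕜) :
    derivedSet (spectrum 𝕜 (a - l • (1 : A))) =
      Homeomorph.subRight l '' derivedSet (spectrum 𝕜 a) := by
  rw [← derivedSet_image_homeomorph, ← Algebra.algebraMap_eq_smul_one, ← spectrum.sub_singleton_eq,
    Set.sub_singleton, Homeomorph.coe_subRight]

end Shift

section Drazin

open Metric

variable {A : Type*} [NormedRing A] [NormedAlgebra ℂ A] {a : A}

theorem exists_outerInverse_spectrum_subset_closedBall [CompleteSpace A] {R : ℝ} (hR : 0 < R)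
    (hdisj : Disjoint (sphere 0 R) (spectrum ℂ a)) :
    ∃ x, Commute a x ∧ x * a * x = x ∧ spectrum ℂ (a - a ^ 2 * x) ⊆ closedBall 0 R := by
  set e := rieszProjection a 0 R
  set k := resolventCauchyTransform a 0 R 0
  have hae : Commute a e := commute_rieszProjection (Commute.refl a)
  have hak : Commute a k := commute_resolventCauchyTransform (Commute.refl a)
  have hek : Commute e k := commute_resolventCauchyTransform hae.symm
  have hk : a * -k = 1 - e := by
    simpa only [map_zero, zero_sub, neg_mul, mul_neg] using
      sub_mul_resolventCauchyTransform_of_mem_ball hdisj (mem_ball_self hR)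
  have hcompl : (1 - e) * (1 - e) = 1 - e := (isIdempotentElem_rieszProjection hR hdisj).one_sub
  have hcompl_k : Commute (1 - e) (-k) := (Commute.one_left _).sub_left hek.neg_right
  have hcomm : Commute a (-k * (1 - e)) :=
    hak.neg_right.mul_right ((Commute.one_right a).sub_right hae)
  have hax : a * (-k * (1 - e)) = 1 - e := by rw [← mul_assoc, hk, hcompl]
  refine ⟨-k * (1 - e), hcomm, ?_, ?_⟩
  · rw [← hcomm.eq, hax, ← mul_assoc, hcompl_k.eq, mul_assoc, hcompl]
  · have hpart : a - a ^ 2 * (-k * (1 - e)) = a * e := by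
      rw [sq, mul_assoc, hax, mul_sub, mul_one, sub_sub_cancel]
    rw [hpart, ← Set.insert_eq_self.2 (mem_closedBall_self hR.le), ← Set.sdiff_singleton_subset_iff]
    exact spectrum_mul_rieszProjection_sdiff_zero_subset hR hdisj

variable [CompleteSpace A] [Nontrivial A]

theorem isGDrazinInv_iff : IsGDrazinInv a ↔ 0 ∉ derivedSet (spectrum ℂ a) := by
  constructor
  · rintro ⟨x, hax, hxax, hquasi⟩
    rw [derivedSet_spectrum_eq_union_of_outerInverse hax hxax, hquasi,
      derivedSet_eq_empty_of_finite (Set.finite_singleton 0), Set.empty_union]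
    exact zero_notMem_derivedSet_spectrum_sq_mul_of_outerInverse hax hxax
  · intro hzero
    obtain ⟨R, hR, hball⟩ := exists_closedBall_inter_subset_of_notMem_derivedSet hzero
    have hdisj : Disjoint (sphere 0 R) (spectrum ℂ a) := Set.disjoint_left.2 fun z hz hza ↦
      ne_of_mem_sphere hz hR.ne' (hball ⟨sphere_subset_closedBall hz, hza⟩)
    obtain ⟨x, hax, hxax, hsub⟩ := exists_outerInverse_spectrum_subset_closedBall hR hdisj
    have hzero_only : spectrum ℂ (a - a ^ 2 * x) ⊆ {0} := by
      intro w hw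
      by_contra hw₀
      have hwa : w ∈ spectrum ℂ a \ {0} := by
        rw [spectrum_sdiff_zero_eq_of_outerInverse hax hxax]
        exact ⟨Or.inl hw, hw₀⟩
      exact hw₀ (hball ⟨hsub hw, hwa.1⟩)
    exact ⟨x, hax, hxax, (spectrum.nonempty _).subset_singleton_iff.1 hzero_only⟩

theorem gDrazinSpectrum_eq_derivedSet (a : A) :
    gDrazinSpectrum a = derivedSet (spectrum ℂ a) := by
  ext l
  rw [gDrazinSpectrum, Set.mem_ofPred_eq, isGDrazinInv_iff, not_not,
    derivedSet_spectrum_sub_smul_one, zero_mem_image_subRight_iff]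

theorem memAcc_iff : MemAcc a ↔ derivedSet (spectrum ℂ a) ⊆ {0} := by
  rw [← gDrazinSpectrum_eq_derivedSet]
  exact forall_congr' fun l ↦ by
    rw [gDrazinSpectrum, Set.mem_ofPred_eq, Set.mem_singleton_iff, not_imp_comm]

theorem isAgDrazinInv_iff : IsAgDrazinInv a ↔ 0 ∉ derivedSet (derivedSet (spectrum ℂ a)) := by
  constructor
  · rintro ⟨x, hax, hxax, hacc⟩
    have hfinite := (Set.finite_singleton (0 : ℂ)).subset (memAcc_iff.1 hacc)
    rw [derivedSet_spectrum_eq_union_of_outerInverse hax hxax, derivedSet_union,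
      derivedSet_eq_empty_of_finite hfinite, Set.empty_union]
    exact fun hzero ↦ zero_notMem_derivedSet_spectrum_sq_mul_of_outerInverse hax hxax
      (derivedSet_derivedSet_subset _ hzero)
  · intro hzero
    obtain ⟨R, hR, hdisj, hball⟩ := exists_disjoint_sphere_of_notMem_derivedSet_derivedSet hzero
    obtain ⟨x, hax, hxax, hsub⟩ := exists_outerInverse_spectrum_subset_closedBall hR hdisj
    refine ⟨x, hax, hxax, memAcc_iff.2 fun w hw ↦ hball ⟨?_, ?_⟩⟩
    · exact (isClosed_iff_derivedSet_subset _).1 isClosed_closedBall (derivedSet_mono _ _ hsub hw)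
    · rw [derivedSet_spectrum_eq_union_of_outerInverse hax hxax]
      exact Or.inl hw

theorem agDrazinSpectrum_eq_derivedSet_derivedSet (a : A) :
    agDrazinSpectrum a = derivedSet (derivedSet (spectrum ℂ a)) := by
  ext l
  rw [agDrazinSpectrum, Set.mem_ofPred_eq, isAgDrazinInv_iff, not_not,
    derivedSet_spectrum_sub_smul_one, derivedSet_image_homeomorph, zero_mem_image_subRight_iff]

end Drazin

theorem agDrazinSpectrum_eq_of_acd_dbd {A : Type*} [NormedRing A] [NormedAlgebra ℂ A]
    [CompleteSpace A] (a b c d : A) (h1 : a * c * d = d * b * d) (h2 : d * b * a = a * c * a) :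
    agDrazinSpectrum (a * c) = agDrazinSpectrum (b * d) := by
  rcases subsingleton_or_nontrivial A with _ | _
  · rw [Subsingleton.elim (a * c) (b * d)]
  · have hderived : derivedSet (spectrum ℂ (a * c)) = derivedSet (spectrum ℂ (b * d)) :=
      derivedSet_congr_of_sdiff_singleton (spectrum_mul_sdiff_zero_of_acd_dbd h1 h2)
    rw [agDrazinSpectrum_eq_derivedSet_derivedSet, agDrazinSpectrum_eq_derivedSet_derivedSet,
      hderived]
end

section
/- Let A be a complex unital Banach algebra, let a ∈ A be ag-Drazin invertible, and let b ∈ A be generalized Drazin invertible with ab = ba = 0. Then a + b is ag-Drazin invertible. -/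
open Filter Topology

/-!
A commuting outer inverse `x` of `a` splits `a` into a part that `x` inverts and the remainder
`a - a ^ 2 * x`. If `y` plays the same role for `b` and `a * b = b * a = 0`, then `x + y` is a
commuting outer inverse of `a + b`, and its remainder is the sum of the two remainders, which are
again orthogonal. It remains to add a quasinilpotent `q` to an orthogonal `a ∈ A^acc`.

Put `c = a - λ` with `λ ≠ 0`, and let `z` be its generalized Drazin inverse. Orthogonality says
`c * q = q * c = -λ • q`. As `-λ` is not in the spectrum of the quasinilpotent remainder of `c`, the
element `q` lives entirely where `z` inverts `c`, so `z * q = -λ⁻¹ • q`. Hence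
`c + q = c * (1 + z * q)` with `1 + z * q = λ⁻¹ • (λ - q)` a unit, and `(1 + z * q)⁻¹ * z` is a
commuting outer inverse of `c + q` with the same remainder as `c`.
-/

/-- `x` is a commuting outer inverse of `a`: the algebraic conditions shared by Drazin,
generalized Drazin and ag-Drazin inverses, which differ only in what they require of the remainder
`a - a ^ 2 * x`. -/
structure IsCommOuterInverse {S : Type*} [Mul S] (x a : S) : Prop where
  commute : Commute a x
  mul_mul_self : x * a * x = x

lemma sub_sq_mul_eq_mul_one_sub {A : Type*} [Ring A] (a x : A) :
    a - a ^ 2 * x = a * (1 - a * x) := by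
  noncomm_ring

namespace IsCommOuterInverse

section SemigroupWithZero

variable {S : Type*} [SemigroupWithZero S] {x a b : S}

lemma mul_eq_zero_of_mul_eq_zero (h : IsCommOuterInverse x a) (hab : a * b = 0) : x * b = 0 := by
  rw [← h.mul_mul_self, mul_assoc x, h.commute.eq, mul_assoc, mul_assoc x a, hab,
    mul_zero, mul_zero]

lemma mul_eq_zero_of_mul_eq_zero' (h : IsCommOuterInverse x a) (hba : b * a = 0) : b * x = 0 := by
  rw [← h.mul_mul_self, ← h.commute.eq, mul_assoc, ← mul_assoc, hba, zero_mul]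

end SemigroupWithZero

lemma add {R : Type*} [NonUnitalSemiring R] {x y a b : R} (hx : IsCommOuterInverse x a)
    (hy : IsCommOuterInverse y b) (hab : a * b = 0) (hba : b * a = 0) :
    IsCommOuterInverse (x + y) (a + b) := by
  have hxb : x * b = 0 := hx.mul_eq_zero_of_mul_eq_zero hab
  have hya : y * a = 0 := hy.mul_eq_zero_of_mul_eq_zero hba
  have hay : a * y = 0 := hy.mul_eq_zero_of_mul_eq_zero' hab
  have hbx : b * x = 0 := hx.mul_eq_zero_of_mul_eq_zero' hba
  constructor
  · simp only [Commute, SemiconjBy, mul_add, add_mul, hxb, hya, hay, hbx, hx.commute.eq,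
      hy.commute.eq, add_zero, zero_add]
  · simp only [mul_add, add_mul, hxb, hya, hx.mul_mul_self, hy.mul_mul_self, mul_assoc x a y,
      mul_assoc y b x, hay, hbx, mul_zero, add_zero, zero_add]

section Ring

variable {A : Type*} [Ring A] {x y a b c z q : A}

lemma isIdempotentElem_mul (h : IsCommOuterInverse x a) : IsIdempotentElem (a * x) := by
  rw [IsIdempotentElem, mul_assoc, ← mul_assoc x, h.mul_mul_self]

lemma sub_sq_mul_eq_one_sub_mul (h : IsCommOuterInverse x a) :
    a - a ^ 2 * x = (1 - a * x) * a := by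
  rw [sub_mul, one_mul, mul_assoc, ← h.commute.eq, ← mul_assoc, sq]

lemma add_sub_sq_mul_add (hx : IsCommOuterInverse x a) (hy : IsCommOuterInverse y b)
    (hab : a * b = 0) (hba : b * a = 0) :
    a + b - (a + b) ^ 2 * (x + y) = (a - a ^ 2 * x) + (b - b ^ 2 * y) := by
  have hay : a * y = 0 := hy.mul_eq_zero_of_mul_eq_zero' hab
  have hbx : b * x = 0 := hx.mul_eq_zero_of_mul_eq_zero' hba
  have sq_add : (a + b) ^ 2 = a ^ 2 + b ^ 2 := by
    simp only [sq, mul_add, add_mul, hab, hba, add_zero, zero_add]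
  have sq_mul : a ^ 2 * y = 0 := by rw [sq, mul_assoc, hay, mul_zero]
  have sq_mul' : b ^ 2 * x = 0 := by rw [sq, mul_assoc, hbx, mul_zero]
  rw [sq_add, mul_add, add_mul, add_mul, sq_mul, sq_mul']
  abel

lemma sub_sq_mul_mul_sub_sq_mul_eq_zero (h : IsCommOuterInverse x a) (hab : a * b = 0) :
    (a - a ^ 2 * x) * (b - b ^ 2 * y) = 0 := by
  rw [h.sub_sq_mul_eq_one_sub_mul, sub_sq_mul_eq_mul_one_sub b y, mul_assoc, ← mul_assoc a, hab,
    zero_mul, mul_zero]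

section Spectrum

variable {R : Type*} [CommSemiring R] [Algebra R A] {μ : R}

-- The component `(1 - c * z) * q` is an eigenvector of the remainder `c - c ^ 2 * z` for `μ`.
lemma mul_mul_eq_of_mul_eq_smul (h : IsCommOuterInverse z c)
    (hμ : μ ∉ spectrum R (c - c ^ 2 * z)) (hcq : c * q = μ • q) : c * z * q = q := by
  have eigen : (c - c ^ 2 * z) * ((1 - c * z) * q) = μ • ((1 - c * z) * q) := calc
    _ = c * ((1 - c * z) * (1 - c * z)) * q := by
      rw [sub_sq_mul_eq_mul_one_sub c z]; simp only [mul_assoc]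
    _ = (1 - c * z) * c * q := by
      rw [h.isIdempotentElem_mul.one_sub.eq, ← sub_sq_mul_eq_mul_one_sub,
        h.sub_sq_mul_eq_one_sub_mul]
    _ = μ • ((1 - c * z) * q) := by rw [mul_assoc, hcq, mul_smul_comm]
  have component_eq_zero : (1 - c * z) * q = 0 :=
    (spectrum.notMem_iff.mp hμ).mul_right_eq_zero.mp <| by
      rw [sub_mul, eigen, Algebra.smul_def, sub_self]
  rw [sub_mul, one_mul, sub_eq_zero] at component_eq_zero
  exact component_eq_zero.symm

lemma mul_mul_eq_of_mul_eq_smul' (h : IsCommOuterInverse z c)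
    (hμ : μ ∉ spectrum R (c - c ^ 2 * z)) (hqc : q * c = μ • q) : q * (c * z) = q := by
  have eigen : q * (1 - c * z) * (c - c ^ 2 * z) = μ • (q * (1 - c * z)) := calc
    _ = q * ((1 - c * z) * (1 - c * z) * c) := by
      rw [h.sub_sq_mul_eq_one_sub_mul]; simp only [mul_assoc]
    _ = q * c * (1 - c * z) := by
      rw [h.isIdempotentElem_mul.one_sub.eq, ← h.sub_sq_mul_eq_one_sub_mul,
        sub_sq_mul_eq_mul_one_sub, mul_assoc]
    _ = μ • (q * (1 - c * z)) := by rw [hqc, smul_mul_assoc]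
  have component_eq_zero : q * (1 - c * z) = 0 :=
    (spectrum.notMem_iff.mp hμ).mul_left_eq_zero.mp <| by
      rw [mul_sub, eigen, Algebra.smul_def, Algebra.commutes, sub_self]
  rw [mul_sub, mul_one, sub_eq_zero] at component_eq_zero
  exact component_eq_zero.symm

end Spectrum

lemma exists_add_of_isUnit (h : IsCommOuterInverse z c) (hcq : Commute c q) (hzq : Commute z q)
    (hq : c * z * q = q) (hu : IsUnit (1 + z * q)) :
    ∃ w, IsCommOuterInverse w (c + q) ∧ c + q - (c + q) ^ 2 * w = c - c ^ 2 * z := by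
  obtain ⟨u, hu⟩ := hu
  have add_eq : c + q = c * u := by rw [hu, mul_add, mul_one, ← mul_assoc, hq]
  have commute_c : Commute c (↑u⁻¹ : A) := by
    refine Commute.units_inv_right ?_
    rw [hu]
    exact (Commute.one_right c).add_right (h.commute.mul_right hcq)
  have commute_z : Commute z (↑u⁻¹ : A) := by
    refine Commute.units_inv_right ?_
    rw [hu]
    exact (Commute.one_right z).add_right ((Commute.refl z).mul_right hzq)
  have add_mul_inverse : (c + q) * (↑u⁻¹ * z) = c * z := by
    rw [add_eq, mul_assoc, Units.mul_inv_cancel_left]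
  have inverse_mul_add : ↑u⁻¹ * z * (c + q) = c * z := by
    rw [add_eq, ← commute_z.eq, mul_assoc, ← mul_assoc _ c, ← commute_c.eq, mul_assoc,
      Units.inv_mul, mul_one, h.commute.eq]
  have q_mul : q * (c * z) = q := by rw [← (hcq.mul_left hzq).eq, hq]
  refine ⟨(↑u⁻¹ : A) * z, ⟨add_mul_inverse.trans inverse_mul_add.symm, ?_⟩, ?_⟩
  · rw [inverse_mul_add, ← commute_z.eq, ← mul_assoc, h.commute.eq, h.mul_mul_self]
  · rw [sq, mul_assoc, add_mul_inverse, add_mul, q_mul, sq, mul_assoc, add_sub_add_right_eq_sub]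

end Ring

end IsCommOuterInverse

section NormedAlgebra

variable {A : Type*} [NormedRing A] [NormedAlgebra ℂ A] {a c q : A}

lemma IsQuasinilpotent.notMem_spectrum (hq : IsQuasinilpotent q) {l : ℂ} (hl : l ≠ 0) :
    l ∉ spectrum ℂ q := by
  rwa [hq, Set.mem_singleton_iff]

lemma IsGDrazinInv.add_of_mul_eq_smul (hc : IsGDrazinInv c) {μ : ℂ} (hμ : μ ≠ 0)
    (hcq : c * q = μ • q) (hqc : q * c = μ • q) (hμq : -μ ∉ spectrum ℂ q) :
    IsGDrazinInv (c + q) := by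
  obtain ⟨z, hcz, hzcz, hn⟩ := hc
  have hz : IsCommOuterInverse z c := ⟨hcz, hzcz⟩
  have hq : c * z * q = q := hz.mul_mul_eq_of_mul_eq_smul (hn.notMem_spectrum hμ) hcq
  have hq' : q * (c * z) = q := hz.mul_mul_eq_of_mul_eq_smul' (hn.notMem_spectrum hμ) hqc
  have z_mul : z * q = μ⁻¹ • q := by
    rw [eq_inv_smul_iff₀ hμ, ← mul_smul_comm, ← hcq, ← mul_assoc, ← hcz, hq]
  have mul_z : q * z = μ⁻¹ • q := by
    rw [eq_inv_smul_iff₀ hμ, ← smul_mul_assoc, ← hqc, mul_assoc, hq']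
  have isUnit_one_add : IsUnit (1 + z * q) := by
    have factor : 1 + z * q = (-μ⁻¹) • (algebraMap ℂ A (-μ) - q) := by
      rw [z_mul, Algebra.algebraMap_eq_smul_one, smul_sub, smul_smul, neg_mul_neg,
        inv_mul_cancel₀ hμ, one_smul, neg_smul, sub_neg_eq_add]
    rw [factor]
    exact (spectrum.notMem_iff.mp hμq).smul (Units.mk0 (-μ⁻¹) (neg_ne_zero.mpr (inv_ne_zero hμ)))
  obtain ⟨w, hw, remainder_eq⟩ := hz.exists_add_of_isUnit (hcq.trans hqc.symm)
    (z_mul.trans mul_z.symm) hq isUnit_one_add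
  exact ⟨w, hw.commute, hw.mul_mul_self, remainder_eq ▸ hn⟩

lemma MemAcc.add_isQuasinilpotent (ha : MemAcc a) (hq : IsQuasinilpotent q) (haq : a * q = 0)
    (hqa : q * a = 0) : MemAcc (a + q) := by
  intro l hl
  rw [add_sub_right_comm]
  refine (ha l hl).add_of_mul_eq_smul (neg_ne_zero.mpr hl) ?_ ?_ ?_
  · rw [sub_mul, haq, smul_one_mul, zero_sub, neg_smul]
  · rw [mul_sub, hqa, mul_smul_one, zero_sub, neg_smul]
  · rw [neg_neg]
    exact hq.notMem_spectrum hl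

end NormedAlgebra

theorem agDrazin_add_gDrazin_orthogonal_general {A : Type*} [NormedRing A] [NormedAlgebra ℂ A]
    (a b : A) (ha : IsAgDrazinInv a) (hb : IsGDrazinInv b) (hab : a * b = 0) (hba : b * a = 0) :
    IsAgDrazinInv (a + b) := by
  obtain ⟨x, hax, hxax, hacc⟩ := ha
  obtain ⟨y, hby, hyby, hqn⟩ := hb
  have hx : IsCommOuterInverse x a := ⟨hax, hxax⟩
  have hy : IsCommOuterInverse y b := ⟨hby, hyby⟩
  have hxy : IsCommOuterInverse (x + y) (a + b) := hx.add hy hab hba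
  refine ⟨x + y, hxy.commute, hxy.mul_mul_self, ?_⟩
  rw [hx.add_sub_sq_mul_add hy hab hba]
  exact hacc.add_isQuasinilpotent hqn (hx.sub_sq_mul_mul_sub_sq_mul_eq_zero hab)
    (hy.sub_sq_mul_mul_sub_sq_mul_eq_zero hba)

theorem agDrazin_add_gDrazin_orthogonal {A : Type*} [NormedRing A] [NormedAlgebra ℂ A]
    [CompleteSpace A] (a b : A) (ha : IsAgDrazinInv a) (hb : IsGDrazinInv b)
    (hab : a * b = 0) (hba : b * a = 0) :
    IsAgDrazinInv (a + b) :=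
  agDrazin_add_gDrazin_orthogonal_general a b ha hb hab hba
end
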